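/- arXiv:1801.00204 — 2 statements merged into one kernel-verified Lean document; each statement's English description precedes it below -/
import Mathlib

section
/- Let c ∈ ℝ with -1 < c < 0. If z ∈ H₁ \ {(a₂,a₂)}, then there exists N ∈ ℕ such that f^N(z) ∉ H₁. -/
/-!
Let `a = a₂ > 1`. The gap `a - xₙ` between `a` and the first coordinate along an orbit satisfies
`a - xₙ₊₁ = a (a - xₙ) + xₙ (a - yₙ)`. So long as `xₙ ≥ 0`, an orbit starting at a point
`z ≤ (a, a)` stays below `(a, a)`, and the gap grows at least by the factor `a` at each step. If
moreover `z ≠ (a, a)`, the gap is positive after one step, hence it eventually exceeds `a`, that is,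
some `xₙ` is negative.
-/

open Set Filter Topology

/-- The map `f(x,y) = (xy + c, x)`. -/
noncomputable def fc (c : ℝ) : ℝ × ℝ → ℝ × ℝ := fun z => (z.1 * z.2 + c, z.1)

/-- `a₁ = (1 - √(1-4c))/2`. -/
noncomputable def a1 (c : ℝ) : ℝ := (1 - Real.sqrt (1 - 4 * c)) / 2

/-- `a₂ = (1 + √(1-4c))/2`. -/
noncomputable def a2 (c : ℝ) : ℝ := (1 + Real.sqrt (1 - 4 * c)) / 2

section

variable {c a : ℝ} {z : ℝ × ℝ}

theorem isFixedPt_fc_diag_iff : Function.IsFixedPt (fc c) (a, a) ↔ a * a + c = a := by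
  simp [Function.IsFixedPt, fc]

theorem isFixedPt_fc_a2 (hc : c ≤ 1 / 4) : Function.IsFixedPt (fc c) (a2 c, a2 c) := by
  have sq_sqrt_disc : Real.sqrt (1 - 4 * c) ^ 2 = 1 - 4 * c := Real.sq_sqrt (by linarith)
  rw [isFixedPt_fc_diag_iff, a2]
  linear_combination sq_sqrt_disc / 4

theorem one_lt_a2 (hc : c < 0) : 1 < a2 c := by
  have one_lt_sqrt_disc : 1 < Real.sqrt (1 - 4 * c) := Real.lt_sqrt_of_sq_lt (by linarith)
  rw [a2]
  linarith

theorem sub_fc_fst (ha : Function.IsFixedPt (fc c) (a, a)) (z : ℝ × ℝ) :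
    a - (fc c z).1 = a * (a - z.1) + z.1 * (a - z.2) := by
  rw [isFixedPt_fc_diag_iff] at ha
  simp only [fc]
  linear_combination -ha

theorem mul_sub_fst_le_sub_fc_fst (ha : Function.IsFixedPt (fc c) (a, a)) (hx : 0 ≤ z.1)
    (hy : z.2 ≤ a) : a * (a - z.1) ≤ a - (fc c z).1 := by
  rw [sub_fc_fst ha]
  exact le_add_of_nonneg_right (mul_nonneg hx (sub_nonneg.2 hy))

theorem fc_le_diag (ha : Function.IsFixedPt (fc c) (a, a)) (ha0 : 0 ≤ a) (hx : 0 ≤ z.1)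
    (hz : z ≤ (a, a)) : fc c z ≤ (a, a) := by
  have gap_nonneg : 0 ≤ a - (fc c z).1 :=
    (mul_nonneg ha0 (sub_nonneg.2 hz.1)).trans (mul_sub_fst_le_sub_fc_fst ha hx hz.2)
  exact ⟨sub_nonneg.1 gap_nonneg, hz.1⟩

theorem fc_fst_lt (ha : Function.IsFixedPt (fc c) (a, a)) (ha0 : 0 < a) (hx : 0 ≤ z.1)
    (hz : z ≤ (a, a)) (hne : z ≠ (a, a)) : (fc c z).1 < a := by
  rw [← sub_pos]
  rcases hz.1.lt_or_eq with fst_lt | fst_eq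
  · exact (mul_pos ha0 (sub_pos.2 fst_lt)).trans_le (mul_sub_fst_le_sub_fc_fst ha hx hz.2)
  · have snd_lt : z.2 < a := hz.2.lt_of_ne fun snd_eq => hne (Prod.ext fst_eq snd_eq)
    rw [sub_fc_fst ha, fst_eq, sub_self, mul_zero, zero_add]
    exact mul_pos ha0 (sub_pos.2 snd_lt)

theorem iterate_fc_le_diag (ha : Function.IsFixedPt (fc c) (a, a)) (ha0 : 0 ≤ a)
    (hx : ∀ n, 0 ≤ ((fc c)^[n] z).1) (hz : z ≤ (a, a)) (n : ℕ) : (fc c)^[n] z ≤ (a, a) := by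
  induction n with
  | zero => exact hz
  | succ n ih =>
    rw [Function.iterate_succ_apply']
    exact fc_le_diag ha ha0 (hx n) ih

theorem tendsto_sub_iterate_fc_fst_atTop (ha : Function.IsFixedPt (fc c) (a, a)) (ha1 : 1 < a)
    (hx : ∀ n, 0 ≤ ((fc c)^[n] z).1) (hz : z ≤ (a, a)) (hlt : z.1 < a) :
    Tendsto (fun n => a - ((fc c)^[n] z).1) atTop atTop := by
  refine tendsto_atTop_of_geom_le (sub_pos.2 hlt) ha1 fun n => ?_
  rw [Function.iterate_succ_apply']
  exact mul_sub_fst_le_sub_fc_fst ha (hx n) (iterate_fc_le_diag ha (by linarith) hx hz n).2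

theorem exists_iterate_fc_fst_neg (ha : Function.IsFixedPt (fc c) (a, a)) (ha1 : 1 < a)
    (hz : z ≤ (a, a)) (hne : z ≠ (a, a)) : ∃ N : ℕ, ((fc c)^[N] z).1 < 0 := by
  by_contra! hx
  have ha0 : 0 < a := by linarith
  have gap_tendsto : Tendsto (fun n => a - ((fc c)^[n] (fc c z)).1) atTop atTop :=
    tendsto_sub_iterate_fc_fst_atTop ha ha1 (fun n => hx (n + 1))
      (fc_le_diag ha ha0.le (hx 0) hz) (fc_fst_lt ha ha0 (hx 0) hz hne)
  obtain ⟨n, hn⟩ := (gap_tendsto.eventually_gt_atTop a).exists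
  have fst_nonneg : 0 ≤ ((fc c)^[n] (fc c z)).1 := hx (n + 1)
  linarith

end

theorem stmt14_general (c : ℝ) (hc : c < 0) (z : ℝ × ℝ) (hz : z ≤ (a2 c, a2 c))
    (hne : z ≠ (a2 c, a2 c)) : ∃ N : ℕ, ((fc c)^[N] z).1 < 0 :=
  exists_iterate_fc_fst_neg (isFixedPt_fc_a2 (by linarith)) (one_lt_a2 hc) hz hne

theorem stmt14 (c : ℝ) (hc1 : -1 < c) (hc2 : c < 0) (z : ℝ × ℝ)
    (hz : z ∈ Icc (1 + c) (a2 c) ×ˢ Icc (0 : ℝ) (a2 c) \ {((a2 c, a2 c) : ℝ × ℝ)}) :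
    ∃ N : ℕ, (fc c)^[N] z ∉ Icc (1 + c) (a2 c) ×ˢ Icc (0 : ℝ) (a2 c) := by
  obtain ⟨N, hN⟩ := stmt14_general c hc2 z ⟨hz.1.1.2, hz.1.2.2⟩ hz.2
  exact ⟨N, fun hmem => by linarith [hmem.1.1]⟩
end

section
/- Let c ∈ ℝ with -1 < c < 0. If fⁿ(z) → θ as n → ∞, then fⁿ(z) ∈ A ∪ H₂ for all n ≥ 0; that is, W^s(θ) ⊆ ⋂_{n=0}^{∞} f^{-n}(A ∪ H₂). -/
open Set Filter Topology

/-!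
Write `a = a₂`, so that `a² + c = a` and, as `c ≤ 0`, `a ≥ 1`. The map `f` is monotone on the closed
first quadrant for the product order, and `p = (b, a)` satisfies `p ≤ f p` if `b ≥ a` and `f p ≤ p`
if `b ≤ a`. An orbit in the quadrant that starts above the first kind of point stays above it, and
dually; applied with `b` the first coordinate of the starting point, this prevents an orbit that
converges to `(a, a)` from starting with both coordinates on the same side of `a`. A convergent
orbit is eventually in the quadrant, hence eventually in `A ∪ H₂`, and since
`f⁻¹(A ∪ H₂) ⊆ A ∪ H₂` it is in `A ∪ H₂` from the beginning.
-/

section Iterate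

variable {α : Type*} {f : α → α}

lemma mem_of_iterate_mem {s : Set α} (hs : f ⁻¹' s ⊆ s) {z : α} {n : ℕ} (hz : f^[n] z ∈ s) :
    z ∈ s := by
  induction n with
  | zero => exact hz
  | succ n ih =>
    rw [Function.iterate_succ_apply'] at hz
    exact ih (hs hz)

lemma tendsto_iterate_iterate [TopologicalSpace α] {z q : α}
    (hz : Tendsto (fun n => f^[n] z) atTop (𝓝 q)) (m : ℕ) :
    Tendsto (fun n => f^[n] (f^[m] z)) atTop (𝓝 q) := by
  simpa only [← Function.iterate_add_apply] using (tendsto_add_atTop_iff_nat m).2 hz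

variable [Preorder α] {s : Set α} {p z q : α}

lemma le_iterate_of_le_map_of_monotoneOn (hf : MonotoneOn f s) (hp : p ∈ s) (hpf : p ≤ f p)
    (hz : ∀ n, f^[n] z ∈ s) (hpz : p ≤ z) (n : ℕ) : p ≤ f^[n] z := by
  induction n with
  | zero => exact hpz
  | succ n ih =>
    rw [Function.iterate_succ_apply']
    exact hpf.trans (hf hp (hz n) ih)

variable [TopologicalSpace α]

lemma le_of_tendsto_iterate_of_le_map [ClosedIciTopology α] (hf : MonotoneOn f s) (hp : p ∈ s)
    (hpf : p ≤ f p) (hz : ∀ n, f^[n] z ∈ s) (hpz : p ≤ z)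
    (hq : Tendsto (fun n => f^[n] z) atTop (𝓝 q)) : p ≤ q :=
  ge_of_tendsto' hq (le_iterate_of_le_map_of_monotoneOn hf hp hpf hz hpz)

lemma le_of_tendsto_iterate_of_map_le [ClosedIicTopology α] (hf : MonotoneOn f s) (hp : p ∈ s)
    (hpf : f p ≤ p) (hz : ∀ n, f^[n] z ∈ s) (hzp : z ≤ p)
    (hq : Tendsto (fun n => f^[n] z) atTop (𝓝 q)) : q ≤ p :=
  le_of_tendsto_iterate_of_le_map (α := αᵒᵈ) hf.dual hp hpf hz hzp hq

end Iterate

lemma a2_mul_self_add {c : ℝ} (hc : c ≤ 1 / 4) : a2 c * a2 c + c = a2 c := by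
  have hsqrt : √(1 - 4 * c) * √(1 - 4 * c) = 1 - 4 * c := Real.mul_self_sqrt (by linarith)
  unfold a2
  linarith

lemma one_le_a2 {c : ℝ} (hc : c ≤ 0) : 1 ≤ a2 c := by
  have hsqrt : 1 ≤ √(1 - 4 * c) := Real.one_le_sqrt.2 (by linarith)
  unfold a2
  linarith

/-- The region `A ∪ H₂`, with a real parameter `a` in place of `a₂`: the points of the closed first
quadrant whose coordinates lie on opposite sides of `a`. -/
def oppositeSides (a : ℝ) : Set (ℝ × ℝ) :=
  Icc 0 a ×ˢ Ici a ∪ Ici a ×ˢ Icc 0 a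

lemma monotoneOn_fc (c : ℝ) : MonotoneOn (fc c) (Ici 0) := by
  intro z hz w hw hzw
  exact ⟨add_le_add_left (mul_le_mul hzw.1 hzw.2 hz.2 hw.1) c, hzw.1⟩

section FixedPoint

variable {a b c : ℝ}

lemma le_fc_of_le (ha : 1 ≤ a) (hac : a * a + c = a) (hab : a ≤ b) : (b, a) ≤ fc c (b, a) := by
  have hprod : 0 ≤ (b - a) * (a - 1) := mul_nonneg (sub_nonneg.2 hab) (sub_nonneg.2 ha)
  exact ⟨show b ≤ b * a + c by linarith, hab⟩

lemma fc_le_of_le (ha : 1 ≤ a) (hac : a * a + c = a) (hba : b ≤ a) : fc c (b, a) ≤ (b, a) := by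
  have hprod : 0 ≤ (a - b) * (a - 1) := mul_nonneg (sub_nonneg.2 hba) (sub_nonneg.2 ha)
  exact ⟨show b * a + c ≤ b by linarith, hba⟩

lemma mem_oppositeSides_of_tendsto_of_nonneg (ha : 1 ≤ a) (hac : a * a + c = a) {z : ℝ × ℝ}
    (hz : Tendsto (fun n => (fc c)^[n] z) atTop (𝓝 (a, a))) (hpos : ∀ n, 0 ≤ (fc c)^[n] z) :
    z ∈ oppositeSides a := by
  have hz0 : 0 ≤ z := hpos 0
  have hp : (z.1, a) ∈ Ici (0 : ℝ × ℝ) := ⟨hz0.1, zero_le_one.trans ha⟩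
  rcases le_total a z.2 with hy | hy
  · have hx : z.1 ≤ a := by
      by_contra! hx
      exact hx.not_ge (le_of_tendsto_iterate_of_le_map (monotoneOn_fc c) hp
        (le_fc_of_le ha hac hx.le) hpos ⟨le_rfl, hy⟩ hz).1
    exact .inl ⟨⟨hz0.1, hx⟩, hy⟩
  · have hx : a ≤ z.1 := by
      by_contra! hx
      exact hx.not_ge (le_of_tendsto_iterate_of_map_le (monotoneOn_fc c) hp
        (fc_le_of_le ha hac hx.le) hpos ⟨le_rfl, hy⟩ hz).1
    exact .inr ⟨hx, hz0.2, hy⟩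

lemma fc_preimage_oppositeSides_subset (ha : 0 < a) (hc : c ≤ 0) (hac : a * a + c = a) :
    fc c ⁻¹' oppositeSides a ⊆ oppositeSides a := by
  rintro ⟨x, y⟩ (⟨⟨h0 : 0 ≤ x * y + c, hle : x * y + c ≤ a⟩, hx : a ≤ x⟩ |
    ⟨hle : a ≤ x * y + c, h0 : 0 ≤ x, hx : x ≤ a⟩)
  · have hx0 : 0 < x := ha.trans_le hx
    have hy0 : 0 ≤ y := nonneg_of_mul_nonneg_right (by linarith : 0 ≤ x * y) hx0
    have hxy : x * y ≤ x * a :=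
      calc x * y ≤ a * a := by linarith
        _ ≤ x * a := mul_le_mul_of_nonneg_right hx ha.le
    exact .inr ⟨hx, hy0, le_of_mul_le_mul_left hxy hx0⟩
  · have hsq : a * a ≤ x * y := by linarith
    have hx0 : 0 < x := h0.lt_of_ne' (left_ne_zero_of_mul ((mul_pos ha ha).trans_le hsq).ne')
    have hxy : x * a ≤ x * y := (mul_le_mul_of_nonneg_right hx ha.le).trans hsq
    exact .inl ⟨⟨h0, hx⟩, le_of_mul_le_mul_left hxy hx0⟩

lemma mem_oppositeSides_of_tendsto (ha : 1 ≤ a) (hc : c ≤ 0) (hac : a * a + c = a) {z : ℝ × ℝ}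
    (hz : Tendsto (fun n => (fc c)^[n] z) atTop (𝓝 (a, a))) : z ∈ oppositeSides a := by
  have ha0 : 0 < a := zero_lt_one.trans_le ha
  have hquadrant : Ici (0 : ℝ × ℝ) ∈ 𝓝 (a, a) := by
    rw [← Prod.mk_zero_zero, ← Ici_prod_Ici]
    exact prod_mem_nhds (Ici_mem_nhds ha0) (Ici_mem_nhds ha0)
  obtain ⟨N, hN⟩ := eventually_atTop.1 (hz.eventually_mem hquadrant)
  have htail : (fc c)^[N] z ∈ oppositeSides a := by
    refine mem_oppositeSides_of_tendsto_of_nonneg ha hac (tendsto_iterate_iterate hz N) fun n => ?_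
    rw [← Function.iterate_add_apply]
    exact hN (n + N) (Nat.le_add_left N n)
  exact mem_of_iterate_mem (fc_preimage_oppositeSides_subset ha0 hc hac) htail

end FixedPoint

theorem stmt15_general (c : ℝ) (hc : c ≤ 0) :
    {z : ℝ × ℝ | Tendsto (fun n => (fc c)^[n] z) atTop (𝓝 (a2 c, a2 c))} ⊆
      ⋂ n : ℕ, (fc c)^[n] ⁻¹'
        (Icc (0 : ℝ) (a2 c) ×ˢ Ici (a2 c) ∪ Ici (a2 c) ×ˢ Icc (0 : ℝ) (a2 c)) := by
  intro z hz
  refine mem_iInter.2 fun n => ?_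
  exact mem_oppositeSides_of_tendsto (one_le_a2 hc) hc (a2_mul_self_add (by linarith))
    (tendsto_iterate_iterate hz n)

theorem stmt15 (c : ℝ) (hc1 : -1 < c) (hc2 : c < 0) :
    {z : ℝ × ℝ | Tendsto (fun n => (fc c)^[n] z) atTop (𝓝 (a2 c, a2 c))} ⊆
      ⋂ n : ℕ, (fc c)^[n] ⁻¹'
        (Icc (0 : ℝ) (a2 c) ×ˢ Ici (a2 c) ∪ Ici (a2 c) ×ˢ Icc (0 : ℝ) (a2 c)) :=
  stmt15_general c hc2.le
end
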